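/- Let a, b, c be positive real numbers satisfying the strict triangle inequalities a < b + c, b < a + c, c < a + b. Then (sinh(a/2)·sinh(b/2)·sinh(c/2))² ≥ sinh((a+b-c)/2)·sinh((a+c-b)/2)·sinh((b+c-a)/2)·sinh((a+b)/4)·sinh((a+c)/4)·sinh((b+c)/4). -/

import Mathlib

/-!
The function `log ∘ sinh` is concave on the positive reals, because its derivative
`cosh / sinh` is antitone there. The numbers `a + b - c`, `a + c - b`, `b + c - a` have pairwise
means `a`, `b`, `c`, so Popoviciu's inequality for a concave `f` bounds
`f (a + b - c) + f (a + c - b) + f (b + c - a) + 3 f ((a + b + c) / 3)` by `2 (f a + f b + f c)`,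
while Jensen's inequality bounds `f ((a + b) / 2) + f ((a + c) / 2) + f ((b + c) / 2)` by
`3 f ((a + b + c) / 3)`. Adding the two for `f = log ∘ sinh` at the half sides and
exponentiating gives the claim.
-/

open Set Real

section Concave

variable {𝕜 : Type*} [Field 𝕜] [LinearOrder 𝕜] [IsStrictOrderedRing 𝕜] {s : Set 𝕜} {f : 𝕜 → 𝕜}

lemma mul_add_mul_le_add_of_concaveOn {u v p q α β : 𝕜} (hf : ConcaveOn 𝕜 s f)
    (hu : u ∈ s) (hv : v ∈ s) (hp : p ∈ uIcc u v) (hq : q ∈ uIcc u v)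
    (hweights : α + β = 2) (hsum : α * u + β * v = p + q) :
    α * f u + β * f v ≤ f p + f q := by
  rw [← segment_eq_uIcc] at hp hq
  obtain ⟨a₁, b₁, ha₁, hb₁, hab₁, rfl⟩ := hp
  obtain ⟨a₂, b₂, ha₂, hb₂, hab₂, rfl⟩ := hq
  have hp := hf.2 hu hv ha₁ hb₁ hab₁
  have hq := hf.2 hu hv ha₂ hb₂ hab₂
  simp only [smul_eq_mul] at hp hq hsum ⊢
  have hcoeff : (β - b₁ - b₂) * (f v - f u) = 0 := by
    rcases eq_or_ne u v with rfl | huv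
    · simp
    · have : (β - b₁ - b₂) * (v - u) = 0 := by
        linear_combination hsum - u * hweights + u * hab₁ + u * hab₂
      rw [(mul_eq_zero.1 this).resolve_right (sub_ne_zero.2 huv.symm), zero_mul]
  linear_combination hp + hq + hcoeff + f u * hweights - f u * hab₁ - f u * hab₂

lemma add_div_two_mem_of_convex {x y : 𝕜} (hs : Convex 𝕜 s) (hx : x ∈ s) (hy : y ∈ s) :
    (x + y) / 2 ∈ s := by
  convert hs.midpoint_mem hx hy using 1
  rw [midpoint_eq_smul_add, smul_eq_mul, invOf_eq_inv, div_eq_inv_mul]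

lemma add_add_div_three_mem_of_convex {x y z : 𝕜} (hs : Convex 𝕜 s)
    (hx : x ∈ s) (hy : y ∈ s) (hz : z ∈ s) : (x + y + z) / 3 ∈ s := by
  have hmem := hs.sum_mem (t := Finset.univ) (w := fun _ : Fin 3 ↦ (1 / 3 : 𝕜))
    (z := ![x, y, z]) (fun _ _ ↦ by positivity) (by simp)
    (by simp [Fin.forall_fin_succ, hx, hy, hz])
  convert hmem using 1
  simp only [Fin.sum_univ_three, smul_eq_mul, Matrix.cons_val]
  ring

lemma sides_mem_of_convex {a b c : 𝕜} (hs : Convex 𝕜 s) (hab : a + b - c ∈ s)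
    (hac : a + c - b ∈ s) (hbc : b + c - a ∈ s) : a ∈ s ∧ b ∈ s ∧ c ∈ s := by
  refine ⟨?_, ?_, ?_⟩
  · convert add_div_two_mem_of_convex hs hab hac using 1
    ring
  · convert add_div_two_mem_of_convex hs hab hbc using 1
    ring
  · convert add_div_two_mem_of_convex hs hac hbc using 1
    ring

lemma add_le_two_mul_of_concaveOn {x y : 𝕜} (hf : ConcaveOn 𝕜 s f) (hx : x ∈ s) (hy : y ∈ s) :
    f x + f y ≤ 2 * f ((x + y) / 2) := by
  have hmid : (x + y) / 2 ∈ uIcc x y := add_div_two_mem_of_convex (convex_uIcc x y)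
    left_mem_uIcc right_mem_uIcc
  have hsum : 1 * f x + 1 * f y ≤ f ((x + y) / 2) + f ((x + y) / 2) :=
    mul_add_mul_le_add_of_concaveOn hf hx hy hmid hmid (by ring) (by ring)
  linarith

lemma add_add_le_three_mul_of_concaveOn {x y z : 𝕜} (hf : ConcaveOn 𝕜 s f)
    (hx : x ∈ s) (hy : y ∈ s) (hz : z ∈ s) : f x + f y + f z ≤ 3 * f ((x + y + z) / 3) := by
  have hjensen := hf.le_map_sum (t := Finset.univ) (w := fun _ : Fin 3 ↦ 1 / 3)
    (p := ![x, y, z]) (fun _ _ ↦ by positivity) (by simp)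
    (by simp [Fin.forall_fin_succ, hx, hy, hz])
  have hmean : 1 / 3 * x + 1 / 3 * y + 1 / 3 * z = (x + y + z) / 3 := by ring
  simp only [Fin.sum_univ_three, smul_eq_mul, Matrix.cons_val, hmean] at hjensen
  linarith

lemma popoviciu_of_concaveOn_of_same_side {x y z m : 𝕜} (hf : ConcaveOn 𝕜 s f)
    (hx : x ∈ s) (hy : y ∈ s) (hz : z ∈ s) (hm : m ∈ s) (hmean : x + y + z = 3 * m)
    (hside : (x ≤ m ∧ y ≤ m) ∨ (m ≤ x ∧ m ≤ y)) :
    f x + f y + f z + 3 * f m ≤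
      2 * (f ((x + y) / 2) + f ((y + z) / 2) + f ((z + x) / 2)) := by
  -- `z` lies on the other side of `m`, far enough out for its means with `x` and `y` not to pass
  -- `m`; these two means add up to `(3 * m + z) / 2`.
  have hyz : (y + z) / 2 ∈ uIcc m z := by
    rw [mem_uIcc]
    grind
  have hzx : (z + x) / 2 ∈ uIcc m z := by
    rw [mem_uIcc]
    grind
  have hmz : 3 / 2 * f m + 1 / 2 * f z ≤ f ((y + z) / 2) + f ((z + x) / 2) :=
    mul_add_mul_le_add_of_concaveOn hf hm hz hyz hzx (by ring) (by linarith)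
  linarith [add_le_two_mul_of_concaveOn hf hx hy]

theorem popoviciu_of_concaveOn {x y z : 𝕜} (hf : ConcaveOn 𝕜 s f)
    (hx : x ∈ s) (hy : y ∈ s) (hz : z ∈ s) :
    f x + f y + f z + 3 * f ((x + y + z) / 3) ≤
      2 * (f ((x + y) / 2) + f ((y + z) / 2) + f ((z + x) / 2)) := by
  have hm : (x + y + z) / 3 ∈ s := add_add_div_three_mem_of_convex hf.1 hx hy hz
  have hmean : x + y + z = 3 * ((x + y + z) / 3) := by ring
  generalize (x + y + z) / 3 = m at hm hmean ⊢
  have two_on_same_side : ((x ≤ m ∧ y ≤ m) ∨ (m ≤ x ∧ m ≤ y)) ∨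
      ((y ≤ m ∧ z ≤ m) ∨ (m ≤ y ∧ m ≤ z)) ∨ ((z ≤ m ∧ x ≤ m) ∨ (m ≤ z ∧ m ≤ x)) := by
    grind
  rcases two_on_same_side with hxy | hyz | hzx
  · exact popoviciu_of_concaveOn_of_same_side hf hx hy hz hm hmean hxy
  · linarith [popoviciu_of_concaveOn_of_same_side hf hy hz hx hm (by linarith) hyz]
  · linarith [popoviciu_of_concaveOn_of_same_side hf hz hx hy hm (by linarith) hzx]

theorem triangle_sum_le_of_concaveOn {a b c : 𝕜} (hf : ConcaveOn 𝕜 s f)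
    (hab : a + b - c ∈ s) (hac : a + c - b ∈ s) (hbc : b + c - a ∈ s) :
    f (a + b - c) + f (a + c - b) + f (b + c - a) +
      f ((a + b) / 2) + f ((a + c) / 2) + f ((b + c) / 2) ≤ 2 * (f a + f b + f c) := by
  obtain ⟨ha, hb, hc⟩ := sides_mem_of_convex hf.1 hab hac hbc
  have hpopoviciu : f (a + b - c) + f (a + c - b) + f (b + c - a) + 3 * f ((a + b + c) / 3) ≤
      2 * (f a + f c + f b) := by
    convert popoviciu_of_concaveOn hf hab hac hbc using 5 <;> ring
  have hjensen : f ((a + b) / 2) + f ((a + c) / 2) + f ((b + c) / 2) ≤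
      3 * f ((a + b + c) / 3) := by
    convert add_add_le_three_mul_of_concaveOn hf (add_div_two_mem_of_convex hf.1 ha hb)
      (add_div_two_mem_of_convex hf.1 ha hc) (add_div_two_mem_of_convex hf.1 hb hc) using 3
    ring
  linarith

end Concave

theorem triangle_prod_le_of_concaveOn_log {s : Set ℝ} {g : ℝ → ℝ} {a b c : ℝ}
    (hpos : ∀ x ∈ s, 0 < g x) (hg : ConcaveOn ℝ s (fun x ↦ log (g x)))
    (hab : a + b - c ∈ s) (hac : a + c - b ∈ s) (hbc : b + c - a ∈ s) :
    g (a + b - c) * g (a + c - b) * g (b + c - a) *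
      g ((a + b) / 2) * g ((a + c) / 2) * g ((b + c) / 2) ≤ (g a * g b * g c) ^ 2 := by
  obtain ⟨ha, hb, hc⟩ := sides_mem_of_convex hg.1 hab hac hbc
  have hexp : ∀ x ∈ s, exp (log (g x)) = g x := fun x hx ↦ exp_log (hpos x hx)
  have hsum := exp_le_exp.2 (triangle_sum_le_of_concaveOn hg hab hac hbc)
  rw [two_mul] at hsum
  simpa only [exp_add, hexp _ hab, hexp _ hac, hexp _ hbc, hexp a ha, hexp b hb, hexp c hc,
    hexp _ (add_div_two_mem_of_convex hg.1 ha hb), hexp _ (add_div_two_mem_of_convex hg.1 ha hc),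
    hexp _ (add_div_two_mem_of_convex hg.1 hb hc), ← sq] using hsum

lemma antitoneOn_cosh_div_sinh : AntitoneOn (fun x ↦ cosh x / sinh x) (Ioi 0) := by
  intro u hu v hv huv
  have hsub : 0 ≤ sinh (v - u) := sinh_nonneg_iff.2 (sub_nonneg.2 huv)
  rw [sinh_sub] at hsub
  exact (div_le_div_iff₀ (sinh_pos_iff.2 hv) (sinh_pos_iff.2 hu)).2 (by linarith)

lemma concaveOn_log_sinh : ConcaveOn ℝ (Ioi 0) (fun x ↦ log (sinh x)) := by
  have hderiv : ∀ x ∈ Ioi (0 : ℝ),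
      HasDerivAt (fun x ↦ log (sinh x)) (cosh x / sinh x) x :=
    fun x hx ↦ (hasDerivAt_sinh x).log (sinh_pos_iff.2 hx).ne'
  refine AntitoneOn.concaveOn_of_deriv (convex_Ioi 0)
    (fun x hx ↦ (hderiv x hx).continuousAt.continuousWithinAt) ?_ ?_
  all_goals rw [interior_Ioi]
  · exact fun x hx ↦ (hderiv x hx).differentiableAt.differentiableWithinAt
  · exact antitoneOn_cosh_div_sinh.congr fun x hx ↦ (hderiv x hx).deriv.symm

theorem stmt_13 (a b c : ℝ) (ha : 0 < a) (hb : 0 < b) (hc : 0 < c)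
    (hab : a < b + c) (hbc : b < a + c) (hca : c < a + b) :
    (Real.sinh (a / 2) * Real.sinh (b / 2) * Real.sinh (c / 2)) ^ 2 ≥
      Real.sinh ((a + b - c) / 2) * Real.sinh ((a + c - b) / 2) *
        Real.sinh ((b + c - a) / 2) *
        Real.sinh ((a + b) / 4) * Real.sinh ((a + c) / 4) * Real.sinh ((b + c) / 4) := by
  have hprod := triangle_prod_le_of_concaveOn_log (a := a / 2) (b := b / 2) (c := c / 2)
    (fun _ ↦ sinh_pos_iff.2) concaveOn_log_sinh
    (mem_Ioi.2 (by linarith)) (mem_Ioi.2 (by linarith)) (mem_Ioi.2 (by linarith))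
  rw [← add_div, ← add_div, ← add_div, ← sub_div, ← sub_div, ← sub_div] at hprod
  simpa only [div_div, show (2 * 2 : ℝ) = 4 by norm_num] using hprod
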